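/- arXiv:1506.08666 — 2 statements merged into one kernel-verified Lean document; each statement's English description precedes it below -/
import Mathlib

section
/- In the algebra □̃_q define A = x₀ + x₁ and B = x₂ + x₃. Then both A³B − [3]_q A²BA + [3]_q ABA² − BA³ + (q² − q⁻²)² c₀ (AB − BA) = S₀ + S₁ and B³A − [3]_q B²AB + [3]_q BAB² − AB³ + (q² − q⁻²)² c₂ (BA − AB) = S₂ + S₃. -/
/-!
`qSerre q u v` is linear in `v`, so each identity splits according to the two summands of the
second argument. Three consecutive generators `x`, `y`, `z` satisfy `q`-Weyl relations that move
`y` to the left of both `x` and `z`; the two rewriting rules do not overlap, so every word is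
a combination, with coefficients central, of normal forms `y ^ k * (word in x, z)`. Comparing normal forms shows that
`qSerre q (x + y) z + (q² - q⁻²)² c ⁅x + y, z⁆ = qSerre q x z` (`qSerre_add_left`).
Replacing `q` by `q⁻¹` leaves `qSerre` unchanged and reverses the direction of the `q`-Weyl
relations, so the same lemma, applied along the cycle in the opposite direction, treats the
other summand. The second identity is the first one shifted by two steps.
-/

noncomputable section

/-- The `q`-Serre expression `u³v − [3]_q u²vu + [3]_q uvu² − vu³`,
where `[3]_q = (q³ − q⁻³)/(q − q⁻¹)`. -/
def qSerre {F : Type*} [Field F] (q : F) {A : Type*} [Ring A] [Algebra F A] (u v : A) : A :=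
  u ^ 3 * v - ((q ^ 3 - q⁻¹ ^ 3) / (q - q⁻¹)) • (u ^ 2 * v * u)
    + ((q ^ 3 - q⁻¹ ^ 3) / (q - q⁻¹)) • (u * v * u ^ 2) - v * u ^ 3
/-- Generator indices for `□̃_q`: `Sum.inl i` is `x_i`, `Sum.inr (Sum.inl i)` is `c_i`,
and `Sum.inr (Sum.inr i)` is `c_i⁻¹`. -/
abbrev BTGen := (ZMod 4) ⊕ ((ZMod 4) ⊕ (ZMod 4))

/-- The free generator corresponding to `x_i`. -/
def btx (F : Type*) [Field F] (i : ZMod 4) : FreeAlgebra F BTGen :=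
  FreeAlgebra.ι F (Sum.inl i)

/-- The free generator corresponding to `c_i`. -/
def btc (F : Type*) [Field F] (i : ZMod 4) : FreeAlgebra F BTGen :=
  FreeAlgebra.ι F (Sum.inr (Sum.inl i))

/-- The free generator corresponding to `c_i⁻¹`. -/
def btcinv (F : Type*) [Field F] (i : ZMod 4) : FreeAlgebra F BTGen :=
  FreeAlgebra.ι F (Sum.inr (Sum.inr i))

/-- The defining relations of the algebra `□̃_q`. -/
inductive BoxTRel (F : Type*) [Field F] (q : F) :
    FreeAlgebra F BTGen → FreeAlgebra F BTGen → Prop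
  | c_cinv (i : ZMod 4) : BoxTRel F q (btc F i * btcinv F i) 1
  | cinv_c (i : ZMod 4) : BoxTRel F q (btcinv F i * btc F i) 1
  | central_c (i : ZMod 4) (a : FreeAlgebra F BTGen) : BoxTRel F q (btc F i * a) (a * btc F i)
  | central_cinv (i : ZMod 4) (a : FreeAlgebra F BTGen) :
      BoxTRel F q (btcinv F i * a) (a * btcinv F i)
  | weyl (i : ZMod 4) : BoxTRel F q
      ((q - q⁻¹)⁻¹ • (q • (btx F i * btx F (i + 1)) - q⁻¹ • (btx F (i + 1) * btx F i)))
      (btc F i)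

/-- The algebra `□̃_q`. -/
abbrev BoxT (F : Type*) [Field F] (q : F) := RingQuot (BoxTRel F q)

/-- The generators `x_i` of `□̃_q`. -/
def xT (F : Type*) [Field F] (q : F) (i : ZMod 4) : BoxT F q :=
  RingQuot.mkAlgHom F (BoxTRel F q) (btx F i)

/-- The central generators `c_i` of `□̃_q`. -/
def cT (F : Type*) [Field F] (q : F) (i : ZMod 4) : BoxT F q :=
  RingQuot.mkAlgHom F (BoxTRel F q) (btc F i)

/-- The central generators `c_i⁻¹` of `□̃_q`. -/
def cinvT (F : Type*) [Field F] (q : F) (i : ZMod 4) : BoxT F q :=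
  RingQuot.mkAlgHom F (BoxTRel F q) (btcinv F i)

/-- The element `S_i = x_i³ x_{i+2} − [3]_q x_i² x_{i+2} x_i + [3]_q x_i x_{i+2} x_i²
− x_{i+2} x_i³` of `□̃_q`. -/
def Sg (F : Type*) [Field F] (q : F) (i : ZMod 4) : BoxT F q :=
  qSerre q (xT F q i) (xT F q (i + 2))

theorem qSerre_add_right {F : Type*} [Field F] (q : F) {R : Type*} [Ring R] [Algebra F R]
    (u v w : R) : qSerre q u (v + w) = qSerre q u v + qSerre q u w := by
  simp only [qSerre, mul_add, add_mul, smul_add]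
  abel

theorem qSerre_inv {F : Type*} [Field F] (q : F) {R : Type*} [Ring R] [Algebra F R]
    (u v : R) : qSerre q⁻¹ u v = qSerre q u v := by
  have h : (q⁻¹ ^ 3 - q⁻¹⁻¹ ^ 3) / (q⁻¹ - q⁻¹⁻¹) = (q ^ 3 - q⁻¹ ^ 3) / (q - q⁻¹) := by
    rw [inv_inv, ← neg_sub (q ^ 3), ← neg_sub q, neg_div_neg_eq]
  rw [qSerre, qSerre, h]

/-- Adding to `x` its successor `y` changes `qSerre q x z` only by a central multiple of a
commutator, when `x, y` and `y, z` are `q`-Weyl pairs. -/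
theorem qSerre_add_left {F : Type*} [Field F] {q : F} (hq : q ≠ 0) (hq2 : q ^ 2 ≠ 1)
    {R : Type*} [Ring R] [Algebra F R] {x y z c d : R}
    (hc : ∀ a, c * a = a * c) (hd : ∀ a, d * a = a * d)
    (hxy : q • (x * y) - q⁻¹ • (y * x) = (q - q⁻¹) • c)
    (hyz : q • (y * z) - q⁻¹ • (z * y) = (q - q⁻¹) • d) :
    qSerre q (x + y) z + ((q ^ 2 - q⁻¹ ^ 2) ^ 2) • (c * ((x + y) * z - z * (x + y))) =
      qSerre q x z := by
  have h1 : q ^ 2 - 1 ≠ 0 := sub_ne_zero.2 hq2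
  have h3 : (q ^ 3 - q⁻¹ ^ 3) / (q - q⁻¹) = q ^ 2 + 1 + q⁻¹ ^ 2 := by
    have : q - q⁻¹ ≠ 0 := by
      intro h
      apply h1
      field_simp at h
      simpa using h
    rw [div_eq_iff this]
    field_simp
    ring
  -- Rewriting rules that move `y` to the left past `x` and `z`; the central
  -- elements `c` and `d` are then collected in front.
  have exy : x * y = q⁻¹ ^ 2 • (y * x) + (1 - q⁻¹ ^ 2) • c := by
    have h : x * y = q⁻¹ • (q • (x * y) - q⁻¹ • (y * x)) + q⁻¹ ^ 2 • (y * x) := by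
      match_scalars <;> field_simp
      ring
    rw [h, hxy]
    match_scalars <;> field_simp
  have ezy : z * y = q ^ 2 • (y * z) + (1 - q ^ 2) • d := by
    have h : z * y = q ^ 2 • (y * z) - q • (q • (y * z) - q⁻¹ • (z * y)) := by
      match_scalars <;> field_simp
      ring
    rw [h, hyz]
    match_scalars <;> field_simp
    ring
  have exy' (t : R) : x * (y * t) = q⁻¹ ^ 2 • (y * (x * t)) + (1 - q⁻¹ ^ 2) • (c * t) := by
    rw [← mul_assoc, exy, add_mul, smul_mul_assoc, smul_mul_assoc, mul_assoc]
  have ezy' (t : R) : z * (y * t) = q ^ 2 • (y * (z * t)) + (1 - q ^ 2) • (d * t) := by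
    rw [← mul_assoc, ezy, add_mul, smul_mul_assoc, smul_mul_assoc, mul_assoc]
  have hc' (a t : R) : a * (c * t) = c * (a * t) := by
    rw [← mul_assoc, ← hc, mul_assoc]
  have hd' (a t : R) : a * (d * t) = d * (a * t) := by
    rw [← mul_assoc, ← hd, mul_assoc]
  have cx := (hc x).symm
  have cy := (hc y).symm
  have cz := (hc z).symm
  have dx := (hd x).symm
  have dy := (hd y).symm
  have dc := hd c
  have cx' := hc' x
  have cy' := hc' y
  have cz' := hc' z
  have dx' := hd' x
  have dy' := hd' y
  clear hc hd hc' hd' hxy hyz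
  simp only [qSerre, h3, pow_succ (_ : R), pow_zero, one_mul, mul_add, add_mul, mul_sub,
    mul_assoc, exy, ezy, exy', ezy', cx, cy, cz, dx, dy, dc, cx', cy', cz', dx', dy',
    mul_smul_comm, smul_mul_assoc, smul_add, smul_sub]
  match_scalars <;> field_simp <;> ring

/-- The first identity for four cyclically `q`-Weyl-related elements of any algebra. -/
theorem qSerre_cycle {F : Type*} [Field F] {q : F} (hq : q ≠ 0) (hq2 : q ^ 2 ≠ 1)
    {R : Type*} [Ring R] [Algebra F R] {x y z w c d e : R}
    (hc : ∀ a, c * a = a * c) (hd : ∀ a, d * a = a * d) (he : ∀ a, e * a = a * e)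
    (hxy : q • (x * y) - q⁻¹ • (y * x) = (q - q⁻¹) • c)
    (hyz : q • (y * z) - q⁻¹ • (z * y) = (q - q⁻¹) • d)
    (hwx : q • (w * x) - q⁻¹ • (x * w) = (q - q⁻¹) • e) :
    qSerre q (x + y) (z + w) +
        ((q ^ 2 - q⁻¹ ^ 2) ^ 2) • (c * ((x + y) * (z + w) - (z + w) * (x + y))) =
      qSerre q x z + qSerre q y w := by
  have hz := qSerre_add_left hq hq2 hc hd hxy hyz
  -- With `q⁻¹` in place of `q`, the triple `y, x, w` plays the role of `x, y, z`.
  have hw : qSerre q⁻¹ (y + x) w +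
      ((q⁻¹ ^ 2 - q⁻¹⁻¹ ^ 2) ^ 2) • (c * ((y + x) * w - w * (y + x))) = qSerre q⁻¹ y w := by
    refine qSerre_add_left (d := e) (inv_ne_zero hq) (by simpa [inv_pow] using hq2) hc he ?_ ?_
    · rw [inv_inv, ← neg_sub (q • _), hxy, ← neg_smul, neg_sub]
    · rw [inv_inv, ← neg_sub (q • _), hwx, ← neg_smul, neg_sub]
  rw [qSerre_inv, qSerre_inv, inv_inv, ← neg_sub (q ^ 2), neg_sq, add_comm y x] at hw
  rw [← hz, ← hw, qSerre_add_right]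
  simp only [mul_add, add_mul, mul_sub, smul_add, smul_sub]
  abel

theorem cT_central {F : Type*} [Field F] (q : F) (i : ZMod 4) (a : BoxT F q) :
    cT F q i * a = a * cT F q i := by
  obtain ⟨b, rfl⟩ := RingQuot.mkAlgHom_surjective F (BoxTRel F q) a
  simpa only [cT, map_mul] using RingQuot.mkAlgHom_rel F (BoxTRel.central_c (q := q) i b)

theorem xT_weyl {F : Type*} [Field F] {q : F} (hq : q ≠ 0) (hq2 : q ^ 2 ≠ 1) (i : ZMod 4) :
    q • (xT F q i * xT F q (i + 1)) - q⁻¹ • (xT F q (i + 1) * xT F q i) =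
      (q - q⁻¹) • cT F q i := by
  have h0 : q - q⁻¹ ≠ 0 := by
    intro h
    apply hq2
    field_simp at h
    exact sub_eq_zero.1 (by simpa using h)
  have h := RingQuot.mkAlgHom_rel F (BoxTRel.weyl (q := q) i)
  simp only [map_smul, map_sub, map_mul] at h
  rw [cT, ← h, smul_inv_smul₀ h0]
  rfl

/-- Proposition 8.8: in `□̃_q`, with `A = x₀ + x₁` and `B = x₂ + x₃`, the `q`-Dolan/Grady
expressions with central corrections equal `S₀ + S₁` and `S₂ + S₃` respectively. -/
theorem stmt10 (F : Type*) [Field F] (q : F) (hq : q ≠ 0) (hq2 : q ^ 2 ≠ 1)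
    (A B : BoxT F q) (hA : A = xT F q 0 + xT F q 1) (hB : B = xT F q 2 + xT F q 3) :
    qSerre q A B + ((q ^ 2 - q⁻¹ ^ 2) ^ 2) • (cT F q 0 * (A * B - B * A)) =
        Sg F q 0 + Sg F q 1 ∧
    qSerre q B A + ((q ^ 2 - q⁻¹ ^ 2) ^ 2) • (cT F q 2 * (B * A - A * B)) =
        Sg F q 2 + Sg F q 3 := by
  subst hA hB
  have w0 := xT_weyl hq hq2 0
  have w1 := xT_weyl hq hq2 1
  have w2 := xT_weyl hq hq2 2
  have w3 := xT_weyl hq hq2 3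
  have e (i : ZMod 4) := cT_central q i
  exact ⟨qSerre_cycle hq hq2 (e 0) (e 1) (e 3) w0 w1 w3,
    qSerre_cycle hq hq2 (e 2) (e 3) (e 1) w2 w3 w1⟩
end
end

section
/- Let □̂_q^even (resp. □̂_q^odd) denote the subalgebra of □̂_q generated by x₀, x₂ (resp. x₁, x₃). Then (i) there exists an F-algebra isomorphism U⁺_q → □̂_q^even sending X ↦ x₀ and Y ↦ x₂, and (ii) there exists an F-algebra isomorphism U⁺_q → □̂_q^odd sending X ↦ x₁ and Y ↦ x₃. -/
/-!
The relations give surjections from `U⁺_q` onto the two subalgebras; the content is injectivity.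
It is obtained from a representation of `□̂_q` on the vector space `U⁺_q`, with every `c_i` acting
as `1`, in which `x₀` and `x₂` act as left multiplication by `X` and `Y`. Left multiplication is
faithful, since `u` is recovered as `u · 1`, so the composite `U⁺_q → □̂_q → End(U⁺_q)` is injective.
Rotating the indices gives the statement for `x₁, x₃`.

The relations between `x₁` and `x₀, x₂` say that `x₁` acts as a skew derivation twisted by the
automorphism `X ↦ q² X`, `Y ↦ q⁻² Y`, with prescribed scalar values on `X` and `Y`; likewise `x₃`,
with the inverse twist. Such skew derivations exist because suitable upper triangular `2 × 2`
matrices over `U⁺_q` satisfy the `q`-Serre relations (`exists_skew_derivation`).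
It remains to see that the operators of `x₁` and `x₃` satisfy the `q`-Serre relations. A `q`-Serre
expression in them skew-commutes with left multiplication by `X` and `Y` (`skew_comm_qSerre`) and
kills `1`, hence vanishes (`end_eq_zero`).
-/

noncomputable section

/-- The defining relations (`q`-Serre relations) of the positive part of `U_q(sl₂-hat)`. -/
inductive UqPlusRel (F : Type*) [Field F] (q : F) :
    FreeAlgebra F (Fin 2) → FreeAlgebra F (Fin 2) → Prop
  | serreXY : UqPlusRel F q (qSerre q (FreeAlgebra.ι F 0) (FreeAlgebra.ι F 1)) 0
  | serreYX : UqPlusRel F q (qSerre q (FreeAlgebra.ι F 1) (FreeAlgebra.ι F 0)) 0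

/-- The positive part `U⁺_q` of `U_q(sl₂-hat)`. -/
abbrev UqPlus (F : Type*) [Field F] (q : F) := RingQuot (UqPlusRel F q)

/-- The generator `X` of `U⁺_q`. -/
def Xg (F : Type*) [Field F] (q : F) : UqPlus F q :=
  RingQuot.mkAlgHom F (UqPlusRel F q) (FreeAlgebra.ι F 0)

/-- The generator `Y` of `U⁺_q`. -/
def Yg (F : Type*) [Field F] (q : F) : UqPlus F q :=
  RingQuot.mkAlgHom F (UqPlusRel F q) (FreeAlgebra.ι F 1)
/-- Generator indices for `□̂_q`: `Sum.inl i` is `x_i`, `Sum.inr (Sum.inl i)` is `c_i`,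
and `Sum.inr (Sum.inr i)` is `c_i⁻¹`. -/
abbrev BHGen := (ZMod 4) ⊕ ((ZMod 4) ⊕ (ZMod 4))

/-- The free generator corresponding to `x_i`. -/
def bhx (F : Type*) [Field F] (i : ZMod 4) : FreeAlgebra F BHGen :=
  FreeAlgebra.ι F (Sum.inl i)

/-- The free generator corresponding to `c_i`. -/
def bhc (F : Type*) [Field F] (i : ZMod 4) : FreeAlgebra F BHGen :=
  FreeAlgebra.ι F (Sum.inr (Sum.inl i))

/-- The free generator corresponding to `c_i⁻¹`. -/
def bhcinv (F : Type*) [Field F] (i : ZMod 4) : FreeAlgebra F BHGen :=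
  FreeAlgebra.ι F (Sum.inr (Sum.inr i))

/-- The defining relations of the algebra `□̂_q`. -/
inductive BoxHRel (F : Type*) [Field F] (q : F) :
    FreeAlgebra F BHGen → FreeAlgebra F BHGen → Prop
  | c_cinv (i : ZMod 4) : BoxHRel F q (bhc F i * bhcinv F i) 1
  | cinv_c (i : ZMod 4) : BoxHRel F q (bhcinv F i * bhc F i) 1
  | central_c (i : ZMod 4) (a : FreeAlgebra F BHGen) : BoxHRel F q (bhc F i * a) (a * bhc F i)
  | central_cinv (i : ZMod 4) (a : FreeAlgebra F BHGen) :
      BoxHRel F q (bhcinv F i * a) (a * bhcinv F i)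
  | weyl (i : ZMod 4) : BoxHRel F q
      ((q - q⁻¹)⁻¹ • (q • (bhx F i * bhx F (i + 1)) - q⁻¹ • (bhx F (i + 1) * bhx F i)))
      (bhc F i)
  | serre (i : ZMod 4) : BoxHRel F q (qSerre q (bhx F i) (bhx F (i + 2))) 0

/-- The algebra `□̂_q`. -/
abbrev BoxH (F : Type*) [Field F] (q : F) := RingQuot (BoxHRel F q)

/-- The generators `x_i` of `□̂_q`. -/
def xH (F : Type*) [Field F] (q : F) (i : ZMod 4) : BoxH F q :=
  RingQuot.mkAlgHom F (BoxHRel F q) (bhx F i)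

/-- The central generators `c_i` of `□̂_q`. -/
def cH (F : Type*) [Field F] (q : F) (i : ZMod 4) : BoxH F q :=
  RingQuot.mkAlgHom F (BoxHRel F q) (bhc F i)

/-- The central generators `c_i⁻¹` of `□̂_q`. -/
def cinvH (F : Type*) [Field F] (q : F) (i : ZMod 4) : BoxH F q :=
  RingQuot.mkAlgHom F (BoxHRel F q) (bhcinv F i)

/-! ### The `q`-Serre expression -/

section Serre

variable {F : Type*} [Field F] {A B : Type*} [Ring A] [Algebra F A] [Ring B] [Algebra F B]

theorem q_sub_inv_ne_zero {q : F} (hq : q ≠ 0) (hq2 : q ^ 2 ≠ 1) : q - q⁻¹ ≠ 0 := by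
  intro h
  apply hq2
  field_simp at h
  linear_combination h

theorem three_eq {q : F} (hq : q ≠ 0) (hq2 : q ^ 2 ≠ 1) :
    (q ^ 3 - q⁻¹ ^ 3) / (q - q⁻¹) = q ^ 2 + 1 + (q ^ 2)⁻¹ := by
  have h : q - q⁻¹ ≠ 0 := q_sub_inv_ne_zero hq hq2
  rw [div_eq_iff h]
  field_simp
  ring

theorem map_qSerre (f : A →ₐ[F] B) (q : F) (u v : A) :
    f (qSerre q u v) = qSerre q (f u) (f v) := by
  simp [qSerre]

/-- An element that `s`-commutes with `u` and `s⁻¹`-commutes with `v` up to scalars, where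
`s + 1 + s⁻¹ = [3]_q`, skew-commutes with both `q`-Serre expressions in `u` and `v`: the lower
order terms cancel. -/
theorem skew_comm_qSerre {q s : F} (hs : s ≠ 0)
    (h3 : (q ^ 3 - q⁻¹ ^ 3) / (q - q⁻¹) = s + 1 + s⁻¹) {a b : F} {u v z : A}
    (hu : z * u = s • (u * z) + a • 1) (hv : z * v = s⁻¹ • (v * z) + b • 1) :
    z * qSerre q u v = s ^ 2 • (qSerre q u v * z) ∧
    z * qSerre q v u = s⁻¹ ^ 2 • (qSerre q v u * z) := by
  have hu' (w : A) : z * (u * w) = s • (u * (z * w)) + a • w := by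
    rw [← mul_assoc, hu]; simp [add_mul, mul_assoc]
  have hv' (w : A) : z * (v * w) = s⁻¹ • (v * (z * w)) + b • w := by
    rw [← mul_assoc, hv]; simp [add_mul, mul_assoc]
  constructor <;>
  · simp only [qSerre, h3]
    simp only [pow_succ, pow_zero, one_mul, mul_add, mul_sub, add_mul, sub_mul,
      mul_assoc, smul_mul_assoc, mul_smul_comm, hu', hv', hu, hv, smul_add, mul_one]
    match_scalars <;> field_simp <;> ring

end Serre

/-! ### The algebra `U⁺_q` by its universal property -/

universe u

/-- `U` is a model of `U⁺_q`: it is generated by `X` and `Y`, which satisfy the `q`-Serre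
relations, and it maps to every algebra with two elements that satisfy them. Working with an
abstract model keeps the quotient construction of `U⁺_q` out of the computations. -/
structure IsUqPlus {F : Type u} [Field F] (q : F) {U : Type u} [Ring U] [Algebra F U]
    (X Y : U) : Prop where
  serre_XY : qSerre q X Y = 0
  serre_YX : qSerre q Y X = 0
  adjoin_XY : Algebra.adjoin F {X, Y} = ⊤
  lift : ∀ {A : Type u} [Ring A] [Algebra F A] (u v : A), qSerre q u v = 0 → qSerre q v u = 0 →
    ∃ f : U →ₐ[F] A, f X = u ∧ f Y = v

section Presentation

variable {F : Type u} [Field F] {q : F}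

theorem serre_XY : qSerre q (Xg F q) (Yg F q) = 0 := by
  have := RingQuot.mkAlgHom_rel F (UqPlusRel.serreXY (F := F) (q := q))
  rwa [map_qSerre, map_zero] at this

theorem serre_YX : qSerre q (Yg F q) (Xg F q) = 0 := by
  have := RingQuot.mkAlgHom_rel F (UqPlusRel.serreYX (F := F) (q := q))
  rwa [map_qSerre, map_zero] at this

theorem uqPlus_lift {A : Type u} [Ring A] [Algebra F A] (u v : A)
    (huv : qSerre q u v = 0) (hvu : qSerre q v u = 0) :
    ∃ f : UqPlus F q →ₐ[F] A, f (Xg F q) = u ∧ f (Yg F q) = v := by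
  refine ⟨RingQuot.liftAlgHom F ⟨FreeAlgebra.lift F ![u, v], ?_⟩, ?_, ?_⟩
  · rintro _ _ (_ | _) <;> simp [map_qSerre, huv, hvu]
  · simp [Xg]
  · simp [Yg]

theorem adjoin_XY : Algebra.adjoin F {Xg F q, Yg F q} = ⊤ := by
  have h := congrArg (Subalgebra.map (RingQuot.mkAlgHom F (UqPlusRel F q)))
    (FreeAlgebra.adjoin_range_ι F (Fin 2))
  rw [AlgHom.map_adjoin, Algebra.map_top,
    (AlgHom.range_eq_top _).2 (RingQuot.mkAlgHom_surjective F _), ← Set.range_comp] at h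
  rw [← h]
  congr 1
  ext w
  simp [Fin.exists_fin_two, Xg, Yg, eq_comm]

theorem isUqPlus : IsUqPlus q (Xg F q) (Yg F q) :=
  ⟨serre_XY, serre_YX, adjoin_XY, uqPlus_lift⟩

end Presentation

/-! ### Skew derivations of `U⁺_q` -/

section UPlus

variable {F : Type u} [Field F] {q : F} {U : Type u} [Ring U] [Algebra F U] {X Y : U}

/-- A subspace containing `1` and stable under left multiplication by `X` and `Y` is everything. -/
theorem IsUqPlus.induction (hU : IsUqPlus q X Y) {p : U → Prop} (one : p 1)
    (smul : ∀ (c : F) w, p w → p (c • w)) (add : ∀ v w, p v → p w → p (v + w))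
    (left_X : ∀ w, p w → p (X * w)) (left_Y : ∀ w, p w → p (Y * w)) (w : U) : p w := by
  have key : ∀ w v : U, p v → p (w * v) := by
    intro w
    have hw : w ∈ Algebra.adjoin F {X, Y} := by rw [hU.adjoin_XY]; trivial
    induction hw using Algebra.adjoin_induction with
    | mem x hx =>
      rcases hx with rfl | rfl
      · exact left_X
      · exact left_Y
    | algebraMap c =>
      intro v hv
      rw [← Algebra.smul_def]
      exact smul c v hv
    | add x y _ _ hx hy =>
      intro v hv
      rw [add_mul]
      exact add _ _ (hx v hv) (hy v hv)
    | mul x y _ _ hx hy =>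
      intro v hv
      rw [mul_assoc]
      exact hx _ (hy v hv)
  simpa using key w 1 one

/-- The matrices `[[s X, a], [0, X]]` and `[[s⁻¹ Y, b], [0, Y]]` satisfy the `q`-Serre relation
as soon as `X` and `Y` do. -/
theorem qSerre_matrix {A : Type u} [Ring A] [Algebra F A] {s : F} (hs : s ≠ 0)
    (h3 : (q ^ 3 - q⁻¹ ^ 3) / (q - q⁻¹) = s + 1 + s⁻¹) (a b : F) {X Y : A}
    (hXY : qSerre q X Y = 0) :
    qSerre q (!![s • X, a • 1; 0, X] : Matrix (Fin 2) (Fin 2) A) !![s⁻¹ • Y, b • 1; 0, Y] = 0 := by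
  have e : qSerre q (!![s • X, a • 1; 0, X] : Matrix (Fin 2) (Fin 2) A)
      !![s⁻¹ • Y, b • 1; 0, Y] = !![s ^ 2 • qSerre q X Y, 0; 0, qSerre q X Y] := by
    simp only [qSerre, h3]
    ext i j
    fin_cases i <;> fin_cases j <;>
    simp [pow_succ, mul_add, add_mul, mul_assoc] <;>
    match_scalars <;> field_simp <;> ring
  rw [e, hXY]
  ext i j
  fin_cases i <;> fin_cases j <;> simp

/-- For `s + 1 + s⁻¹ = [3]_q` and any scalars `a, b` there is a skew derivation of `U⁺_q`, twisted
by the automorphism `X ↦ s X`, `Y ↦ s⁻¹ Y`, that takes the values `a` on `X` and `b` on `Y`. It is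
the upper right entry of a homomorphism to triangular `2 × 2` matrices. -/
theorem IsUqPlus.exists_skew_derivation (hU : IsUqPlus q X Y) {s : F} (hs : s ≠ 0)
    (h3 : (q ^ 3 - q⁻¹ ^ 3) / (q - q⁻¹) = s + 1 + s⁻¹) (a b : F) :
    ∃ D : Module.End F U, D 1 = 0 ∧
      (D * Algebra.lmul F _ X = s • (Algebra.lmul F _ X * D) + a • 1) ∧
      (D * Algebra.lmul F _ Y = s⁻¹ • (Algebra.lmul F _ Y * D) + b • 1) := by
  obtain ⟨φ, hX, hY⟩ := hU.lift (A := Matrix (Fin 2) (Fin 2) (U))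
    !![s • X, a • 1; 0, X] !![s⁻¹ • Y, b • 1; 0, Y]
    (qSerre_matrix hs h3 a b hU.serre_XY)
    (by
      have h := qSerre_matrix (q := q) (s := s⁻¹) (inv_ne_zero hs)
        (by rw [h3, inv_inv]; ring) b a hU.serre_YX
      rwa [inv_inv] at h)
  have h11 : ∀ w, φ w 1 1 = w := by
    refine hU.induction ?_ ?_ ?_ ?_ ?_
    · simp
    · intro c w hw; simp [hw]
    · intro v w hv hw; simp [hv, hw]
    · intro w hw; simp [hX, Matrix.mul_apply, Fin.sum_univ_two, hw]
    · intro w hw; simp [hY, Matrix.mul_apply, Fin.sum_univ_two, hw]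
  refine ⟨{ toFun := fun w => φ w 0 1, map_add' := ?_, map_smul' := ?_ }, ?_, ?_, ?_⟩
  · intro v w; simp
  · intro c w; simp
  · simp
  · ext w; simp [hX, Matrix.mul_apply, Fin.sum_univ_two, h11]
  · ext w; simp [hY, Matrix.mul_apply, Fin.sum_univ_two, h11]

/-- An operator on `U⁺_q` that kills `1` and skew-commutes with left multiplication by `X` and `Y`
vanishes. -/
theorem IsUqPlus.end_eq_zero (hU : IsUqPlus q X Y) {S : Module.End F U} {α β : F} (h1 : S 1 = 0)
    (hX : Algebra.lmul F _ X * S = α • (S * Algebra.lmul F _ X))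
    (hY : Algebra.lmul F _ Y * S = β • (S * Algebra.lmul F _ Y))
    (hα : α ≠ 0) (hβ : β ≠ 0) : S = 0 := by
  ext w
  induction w using hU.induction with
  | one => simpa using h1
  | smul c w hw => simp_all
  | add v w hv hw => simp_all
  | left_X w hw =>
    have h : X * S w = α • S (X * w) := LinearMap.congr_fun hX w
    rw [hw, LinearMap.zero_apply, mul_zero, eq_comm, smul_eq_zero] at h
    exact h.resolve_left hα
  | left_Y w hw =>
    have h : Y * S w = β • S (Y * w) := LinearMap.congr_fun hY w
    rw [hw, LinearMap.zero_apply, mul_zero, eq_comm, smul_eq_zero] at h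
    exact h.resolve_left hβ

end UPlus

/-! ### Representations of `□̂_q` -/

section Box

variable {F : Type u} [Field F] {q : F} {U : Type u} [Ring U] [Algebra F U] {X Y : U}

theorem serre_xH (i : ZMod 4) : qSerre q (xH F q i) (xH F q (i + 2)) = 0 := by
  have := RingQuot.mkAlgHom_rel F (BoxHRel.serre (F := F) (q := q) i)
  rwa [map_qSerre, map_zero] at this

/-- A homomorphism out of `□̂_q` that sends every `c_i` to `1`. -/
theorem boxH_lift {A : Type u} [Ring A] [Algebra F A] (f : ZMod 4 → A)
    (hW : ∀ i, (q - q⁻¹)⁻¹ • (q • (f i * f (i + 1)) - q⁻¹ • (f (i + 1) * f i)) = 1)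
    (hS : ∀ i, qSerre q (f i) (f (i + 2)) = 0) :
    ∃ ψ : BoxH F q →ₐ[F] A, ∀ i, ψ (xH F q i) = f i := by
  refine ⟨RingQuot.liftAlgHom F ⟨FreeAlgebra.lift F (Sum.elim f fun _ => 1), ?_⟩, ?_⟩
  · intro x y h
    induction h with
    | weyl i => simpa [bhx, bhc] using hW i
    | serre i => simpa [map_qSerre, bhx] using hS i
    | _ => simp [bhc, bhcinv]
  · intro i
    simp [xH, bhx]

/-- `□̂_q` acts on `U⁺_q` with `x₀` and `x₂` as left multiplications by `X` and `Y`; `f i` is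
the operator by which `x_i` acts, and every `c_i` acts as `1`. -/
theorem IsUqPlus.exists_rep (hU : IsUqPlus q X Y) (hq : q ≠ 0) (hq2 : q ^ 2 ≠ 1) :
    ∃ f : ZMod 4 → Module.End F U,
      f 0 = Algebra.lmul F _ X ∧ f 2 = Algebra.lmul F _ Y ∧
      (∀ i, (q - q⁻¹)⁻¹ • (q • (f i * f (i + 1)) - q⁻¹ • (f (i + 1) * f i)) = 1) ∧
      (∀ i, qSerre q (f i) (f (i + 2)) = 0) := by
  have hκ : q - q⁻¹ ≠ 0 := q_sub_inv_ne_zero hq hq2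
  have hs : q ^ 2 ≠ 0 := pow_ne_zero 2 hq
  have h3 := three_eq hq hq2
  -- the values of `D` and `E` on `X` and `Y` are forced by the relations for `c_i = 1`
  obtain ⟨D, hD1, hDX, hDY⟩ := hU.exists_skew_derivation hs h3
    (-(q * (q - q⁻¹))) (q⁻¹ * (q - q⁻¹))
  obtain ⟨E, hE1, hEX, hEY⟩ := hU.exists_skew_derivation (s := (q ^ 2)⁻¹) (inv_ne_zero hs)
    (by rw [h3, inv_inv]; ring) (q⁻¹ * (q - q⁻¹)) (-(q * (q - q⁻¹)))
  rw [inv_inv] at hEY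
  set L := Algebra.lmul F _ X with hL
  set M := Algebra.lmul F _ Y with hM
  have solve {x z : Module.End F U} {s a : F} (hs : s ≠ 0)
      (h : z * x = s • (x * z) + a • 1) : x * z = s⁻¹ • (z * x) + (-(s⁻¹ * a)) • 1 := by
    rw [h]; match_scalars <;> field_simp; ring
  have eX := solve (inv_ne_zero hs) hEX
  have dY := solve (inv_ne_zero hs) hDY
  rw [inv_inv] at eX dY
  have cX := skew_comm_qSerre hs h3 eX (solve hs hDX)
  have cY := skew_comm_qSerre hs h3 dY (solve hs hEY)
  have sDE : qSerre q D E = 0 := by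
    refine hU.end_eq_zero ?_ cX.2 cY.1 ?_ ?_
    · simp [qSerre, hD1, hE1, pow_succ]
    all_goals simp [hq]
  have sED : qSerre q E D = 0 := by
    refine hU.end_eq_zero ?_ cX.1 cY.2 ?_ ?_
    · simp [qSerre, hD1, hE1, pow_succ]
    all_goals simp [hq]
  have sXY : qSerre q L M = 0 := by
    rw [hL, hM, ← map_qSerre, hU.serre_XY, map_zero]
  have sYX : qSerre q M L = 0 := by
    rw [hL, hM, ← map_qSerre, hU.serre_YX, map_zero]
  have w1 {x z : Module.End F U}
      (h : z * x = (q ^ 2) • (x * z) + (-(q * (q - q⁻¹))) • 1) :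
      (q - q⁻¹)⁻¹ • (q • (x * z) - q⁻¹ • (z * x)) = 1 := by
    rw [inv_smul_eq_iff₀ hκ, h]; match_scalars <;> field_simp; ring
  have w2 {x z : Module.End F U}
      (h : z * x = (q ^ 2)⁻¹ • (x * z) + (q⁻¹ * (q - q⁻¹)) • 1) :
      (q - q⁻¹)⁻¹ • (q • (z * x) - q⁻¹ • (x * z)) = 1 := by
    rw [inv_smul_eq_iff₀ hκ, h]; match_scalars <;> field_simp; ring
  refine ⟨(![L, D, M, E] : Fin 4 → _), rfl, rfl, ?_, ?_⟩
  · intro i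
    fin_cases i
    · exact w1 hDX
    · exact w2 hDY
    · exact w1 hEY
    · exact w2 hEX
  · intro i
    fin_cases i
    · exact sXY
    · exact sDE
    · exact sYX
    · exact sED

theorem IsUqPlus.equiv_adjoin (hU : IsUqPlus q X Y) (hq : q ≠ 0) (hq2 : q ^ 2 ≠ 1) (i : ZMod 4) :
    ∃ e : U ≃ₐ[F]
        (Algebra.adjoin F {xH F q i, xH F q (i + 2)} : Subalgebra F (BoxH F q)),
      (e X : BoxH F q) = xH F q i ∧ (e Y : BoxH F q) = xH F q (i + 2) := by
  obtain ⟨θ, hX, hY⟩ := hU.lift (xH F q i) (xH F q (i + 2)) (serre_xH i)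
    (by
      have h := serre_xH (F := F) (q := q) (i + 2)
      have h4 : i + 2 + 2 = i := by clear h; revert i; decide
      rwa [h4] at h)
  obtain ⟨f, f0, f2, hW, hS⟩ := hU.exists_rep hq hq2
  -- rotating the indices by `i` turns the generators `x_i, x_{i+2}` into multiplications
  obtain ⟨ψ, hψ⟩ := boxH_lift (q := q) (fun j => f (j - i))
    (fun j => by have := hW (j - i); rwa [← add_sub_right_comm] at this)
    (fun j => by have := hS (j - i); rwa [← add_sub_right_comm] at this)
  have hcomp : ∀ w : U, ψ (θ w) = Algebra.lmul F _ w := by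
    intro w
    have hw : w ∈ Algebra.adjoin F {X, Y} := by rw [hU.adjoin_XY]; trivial
    induction hw using Algebra.adjoin_induction with
    | mem x hx =>
      rcases hx with rfl | rfl
      · simp only [hX, hψ, sub_self, f0]
      · simp only [hY, hψ, add_sub_cancel_left, f2]
    | algebraMap c => simp only [AlgHom.commutes]
    | add x y _ _ hx hy => simp only [map_add, hx, hy]
    | mul x y _ _ hx hy => simp only [map_mul, hx, hy]
  have hinj : Function.Injective θ := by
    intro v w h
    have h' := LinearMap.congr_fun ((hcomp v).symm.trans ((congrArg ψ h).trans (hcomp w))) 1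
    simpa using h'
  have hrange : θ.range = Algebra.adjoin F {xH F q i, xH F q (i + 2)} := by
    rw [← Algebra.map_top, ← hU.adjoin_XY, AlgHom.map_adjoin, Set.image_pair, hX, hY]
  exact ⟨(AlgEquiv.ofInjective θ hinj).trans (Subalgebra.equivOfEq _ _ hrange), hX, hY⟩

end Box

/-- Proposition 9.25(i),(ii): `U⁺_q` is isomorphic to the even and odd subalgebras of `□̂_q`. -/
theorem stmt14 (F : Type*) [Field F] (q : F) (hq : q ≠ 0) (hq2 : q ^ 2 ≠ 1) :
    (∃ e : UqPlus F q ≃ₐ[F] (Algebra.adjoin F {xH F q 0, xH F q 2} : Subalgebra F (BoxH F q)),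
      (e (Xg F q) : BoxH F q) = xH F q 0 ∧ (e (Yg F q) : BoxH F q) = xH F q 2) ∧
    (∃ e : UqPlus F q ≃ₐ[F] (Algebra.adjoin F {xH F q 1, xH F q 3} : Subalgebra F (BoxH F q)),
      (e (Xg F q) : BoxH F q) = xH F q 1 ∧ (e (Yg F q) : BoxH F q) = xH F q 3) := by
  exact ⟨isUqPlus.equiv_adjoin hq hq2 0, isUqPlus.equiv_adjoin hq hq2 1⟩
end
end
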